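/- Let (R, m, k) be a commutative Noetherian local ring with m^3 = 0, and let M be a finitely generated R-module. If Tor_i^R(M, M) = 0 for 2 <= i <= 5, then M is a free R-module. -/

import Mathlib

/-!
Let `F₀ → M` be a minimal free cover with kernel `N ⊆ m F₀`, let `π : F₁ = Rⁿ → N` be a minimal free
cover and `K = ker π ⊆ m F₁`. The vanishing of `Tor₂(M, M)` and `Tor₃(M, M)` suffices: shifting it
through the syzygies in both variables, these say that `N ⊗ N → N ⊗ F₀` and `K ⊗ N → F₁ ⊗ N` are
injective.

Since `m ^ 3 = 0`, the ideal `m ^ 2` kills `N`, so `m` kills the image of `N ⊗ N` in `N ⊗ F₀`, and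
hence kills `N ⊗ N`. The kernel of `π ⊗ π` is the sum of the images of `K ⊗ F₁` and `F₁ ⊗ K`, so
every `n × n` matrix over `m` is a matrix with columns in `K` plus a matrix with rows in `K`. From
the second injectivity, a matrix with both rows and columns in `K` comes from `K ⊗ K`, so it has
entries in `m ^ 2`. Counting dimensions in the `n × n` matrices over `m / m ^ 2`
(`eq_zero_of_decomposition`) gives `n = 0` unless `m = 0`. So `N = 0` and `M` is free.
-/

open CategoryTheory Limits

universe u

section

open TensorProduct IsLocalRing

variable {R : Type u} [CommRing R]

/-! ### Minimal covers and coordinates of tensors -/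

/-- A finitely generated module over a local ring is covered by a finite free module with kernel
inside `m • Rⁿ`, by Nakayama's lemma. -/
theorem exists_minimal_cover [IsLocalRing R] (M : Type u) [AddCommGroup M] [Module R M]
    [Module.Finite R M] :
    ∃ (n : ℕ) (π : (Fin n → R) →ₗ[R] M), Function.Surjective π ∧
      ∀ x, π x = 0 → ∀ i, x i ∈ maximalIdeal R := by
  let w := Module.finBasis (ResidueField R) (ResidueField R ⊗[R] M)
  obtain ⟨v, hv⟩ :=
    (TensorProduct.mk_surjective R M (ResidueField R) Ideal.Quotient.mk_surjective).comp_left w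
  refine ⟨_, Fintype.linearCombination R v, ?_, fun x hx i ↦ ?_⟩
  · rw [← LinearMap.range_eq_top, Fintype.range_linearCombination]
    exact span_eq_top_of_tmul_eq_basis v w (congr_fun hv)
  · have h := congr_arg (TensorProduct.mk R (ResidueField R) M 1) hx
    have hli := Fintype.linearIndependent_iff.mp w.linearIndependent (fun i ↦ residue R (x i))
    rw [← residue_eq_zero_iff]
    refine hli ?_ i
    rw [map_zero, Fintype.linearCombination_apply, map_sum] at h
    rw [← h]
    refine Finset.sum_congr rfl fun j _ ↦ ?_
    rw [← congr_fun hv j, map_smul, ← algebraMap_smul (ResidueField R) (x j)]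
    rfl

/-- The coordinate matrix `(xᵢ yⱼ)` of a tensor `x ⊗ y ∈ Rⁿ ⊗ Rⁿ`. -/
noncomputable def coordMatrix (R : Type u) [CommRing R] (n : ℕ) :
    (Fin n → R) ⊗[R] (Fin n → R) →ₗ[R] (Fin n → Fin n → R) :=
  TensorProduct.lift (LinearMap.mk₂ R (fun x y i j ↦ x i * y j)
    (fun _ _ _ ↦ by ext; simp [add_mul]) (fun _ _ _ ↦ by ext; simp [mul_assoc])
    (fun _ _ _ ↦ by ext; simp [mul_add]) (fun _ _ _ ↦ by ext; simp [mul_left_comm]))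

@[simp] theorem coordMatrix_tmul {n : ℕ} (x y : Fin n → R) (i j : Fin n) :
    coordMatrix R n (x ⊗ₜ y) i j = x i * y j := rfl

theorem eq_sum_single {n : ℕ} (x : Fin n → R) :
    x = ∑ i, x i • (Pi.single i 1 : Fin n → R) := by
  ext j; simp [Finset.sum_apply, Pi.single_apply]

theorem coordMatrix_col_mem {n : ℕ} (K : Submodule R (Fin n → R)) (t : K ⊗[R] (Fin n → R))
    (j : Fin n) : (fun i ↦ coordMatrix R n (K.subtype.rTensor _ t) i j) ∈ K := by
  induction t with
  | zero =>
    simp only [map_zero]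
    exact zero_mem K
  | tmul x y =>
    convert K.smul_mem (y j) x.2 using 1
    ext i; simp [mul_comm]
  | add x y hx hy =>
    simp only [map_add]
    exact add_mem hx hy

theorem coordMatrix_row_mem {n : ℕ} (K : Submodule R (Fin n → R)) (t : (Fin n → R) ⊗[R] K)
    (i : Fin n) : coordMatrix R n (K.subtype.lTensor _ t) i ∈ K := by
  induction t with
  | zero => simp
  | tmul x y => exact K.smul_mem (x i) y.2
  | add x y hx hy =>
    simp only [map_add]
    exact add_mem hx hy

/-! ### The dimension count -/

/-- The dimension count. Let `D` be the space of classes modulo `m ^ 2` of matrices whose columns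
lie in `K`. By `hsum` the matrices over `m / m ^ 2` are `D + Dᵀ`, and by `hint` the space `D`
contains no nonzero symmetric matrix, so `D` embeds in the strictly upper triangular matrices via
`f ↦ f - fᵀ`. With `ℓ = dim (m / m ^ 2)` this gives `n² ℓ ≤ 2 dim D ≤ n (n - 1) ℓ`. -/
theorem eq_zero_of_decomposition [IsNoetherianRing R] [IsLocalRing R]
    (hfield : ¬ IsField R) (hnil : IsNilpotent (maximalIdeal R)) {n : ℕ}
    (K : Submodule R (Fin n → R))
    (hK2 : ∀ x : Fin n → R, (∀ i, x i ∈ maximalIdeal R ^ 2) → x ∈ K)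
    (hsum : ∀ f : Fin n → Fin n → R, (∀ i j, f i j ∈ maximalIdeal R) →
      ∃ g h : Fin n → Fin n → R, f = g + h ∧ (∀ j, (fun i ↦ g i j) ∈ K) ∧ ∀ i, h i ∈ K)
    (hint : ∀ f : Fin n → Fin n → R, (∀ j, (fun i ↦ f i j) ∈ K) → (∀ i, f i ∈ K) →
      ∀ i j, f i j ∈ maximalIdeal R ^ 2)
    (hK1 : ∀ x ∈ K, ∀ i, x i ∈ maximalIdeal R) : n = 0 := by
  have : IsArtinianRing R := (isArtinianRing_iff_isNilpotent_maximalIdeal R).mpr hnil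
  set m := maximalIdeal R with hm
  let V := m.Cotangent
  have hV : Nontrivial V := by
    rw [← not_subsingleton_iff_nontrivial]
    exact fun h ↦ hfield (subsingleton_cotangentSpace_iff.mp h)
  have hVart : IsArtinian R V := isArtinian_of_surjective m m.toCotangent m.toCotangent_surjective
  have hVnoe : IsNoetherian R V :=
    isNoetherian_of_surjective m.toCotangent m.toCotangent_range
  have hVpos : Module.length R V ≠ 0 := Module.length_pos.ne'
  have hVfin : Module.length R V ≠ ⊤ := Module.length_ne_top
  -- matrices over `m` whose columns lie in `K`, and their classes modulo `m ^ 2`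
  let C : Submodule R (Fin n → Fin n → m) :=
    { carrier := {f | ∀ j, (fun i ↦ (f i j : R)) ∈ K}
      add_mem' := fun ha hb j ↦ K.add_mem (ha j) (hb j)
      zero_mem' := fun _ ↦ K.zero_mem
      smul_mem' := fun r _ ha j ↦ K.smul_mem r (ha j) }
  let q : (Fin n → Fin n → m) →ₗ[R] (Fin n → Fin n → V) :=
    LinearMap.compLeft (LinearMap.compLeft m.toCotangent (Fin n)) (Fin n)
  have hq : ∀ f i j, q f i j = m.toCotangent (f i j) := fun _ _ _ ↦ rfl
  let D := C.map q
  let T : (Fin n → Fin n → V) →ₗ[R] (Fin n → Fin n → V) :=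
    { toFun := fun f i j ↦ f j i
      map_add' := fun _ _ ↦ rfl
      map_smul' := fun _ _ ↦ rfl }
  let σ : D × D →ₗ[R] (Fin n → Fin n → V) := D.subtype.coprod (T ∘ₗ D.subtype)
  have hσ : Function.Surjective σ := by
    intro u
    choose f hf using fun i j ↦ m.toCotangent_surjective (u i j)
    obtain ⟨g, h, hgh, hg, hh⟩ := hsum (fun i j ↦ (f i j : R)) (fun i j ↦ (f i j).2)
    let g' : Fin n → Fin n → m := fun i j ↦ ⟨g i j, hK1 _ (hg j) i⟩
    let h' : Fin n → Fin n → m := fun i j ↦ ⟨h j i, hK1 _ (hh j) i⟩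
    refine ⟨(⟨q g', Submodule.mem_map_of_mem (fun j ↦ hg j)⟩,
      ⟨q h', Submodule.mem_map_of_mem (fun j ↦ hh j)⟩), ?_⟩
    ext i j
    change m.toCotangent (g' i j) + m.toCotangent (h' j i) = u i j
    rw [← map_add, ← hf]
    congr 1
    ext
    exact (congr_fun₂ hgh i j).symm
  let δ : D →ₗ[R] ({p : Fin n × Fin n // p.1 < p.2} → V) :=
    { toFun := fun f p ↦ f.1 p.1.1 p.1.2 - f.1 p.1.2 p.1.1
      map_add' := fun f g ↦ by ext p; simp [add_sub_add_comm]
      map_smul' := fun r f ↦ by ext p; simp [smul_sub] }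
  have hδ : Function.Injective δ := by
    rw [injective_iff_map_eq_zero]
    rintro ⟨_, f, hf, rfl⟩ hz
    have hlt : ∀ i j, i < j → (f i j - f j i : R) ∈ m ^ 2 := fun i j hij ↦
      (Ideal.toCotangent_eq m).mp (sub_eq_zero.mp (congr_fun hz ⟨(i, j), hij⟩))
    have hsymm : ∀ i j, (f i j - f j i : R) ∈ m ^ 2 := by
      intro i j
      rcases lt_trichotomy i j with h | rfl | h
      · exact hlt i j h
      · simp
      · rw [← neg_sub]; exact neg_mem (hlt j i h)
    -- `f` is symmetric modulo `m ^ 2`, so its rows also lie in `K`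
    have := hint (fun i j ↦ (f i j : R)) hf fun i ↦ by
      have h := K.add_mem (hf i) (hK2 (fun j ↦ (f i j - f j i : R)) fun j ↦ hsymm i j)
      convert h using 1
      ext j; simp
    ext i j
    exact (Ideal.toCotangent_eq_zero m _).mpr (this i j)
  have h1 := Module.length_le_of_surjective σ hσ
  have h2 := Module.length_le_of_injective δ hδ
  simp only [Module.length_prod, Module.length_pi, ENat.card_eq_coe_fintype_card,
    Fintype.card_fin] at h1 h2
  have hcard : 2 * Fintype.card {p : Fin n × Fin n // p.1 < p.2} + n ≤ n * n := by
    let e : ({p : Fin n × Fin n // p.1 < p.2} ⊕ {p : Fin n × Fin n // p.1 < p.2}) ⊕ Fin n →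
      Fin n × Fin n := Sum.elim (Sum.elim (fun p ↦ p.1) (fun p ↦ p.1.swap)) (fun i ↦ (i, i))
    have he : Function.Injective e := by
      rintro ((⟨⟨a, b⟩, h⟩ | ⟨⟨a, b⟩, h⟩) | a) ((⟨⟨c, d⟩, h'⟩ | ⟨⟨c, d⟩, h'⟩) | c) heq <;>
        simp only [e, Sum.elim_inl, Sum.elim_inr, Prod.swap, Prod.mk.injEq] at heq <;> grind
    have := Fintype.card_le_of_injective e he
    simpa [two_mul] using this
  generalize Module.length R V = l at *
  generalize Module.length R D = d at *
  lift l to ℕ using hVfin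
  have hd : d ≠ ⊤ := ne_top_of_le_ne_top (by exact_mod_cast ENat.natCast_ne_top _) h2
  lift d to ℕ using hd
  norm_cast at h1 h2 hVpos
  have : n * l = 0 := by nlinarith
  rcases Nat.mul_eq_zero.mp this with h | h
  · exact h
  · exact absurd h hVpos

/-- Let `N ⊆ m Rᵖ` have minimal cover `π : Rⁿ → N` with kernel `K`. Injectivity of `N ⊗ N → N ⊗ Rᵖ`
forces `m (N ⊗ N) = 0`, so every matrix over `m` is a sum of one with columns in `K` and one with
rows in `K`. Injectivity of `K ⊗ N → Rⁿ ⊗ N` forces a matrix with rows and columns in `K` to lie in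
the image of `K ⊗ K`, so to have entries in `m ^ 2`. -/
theorem eq_zero_of_injective [IsNoetherianRing R] [IsLocalRing R]
    (hfield : ¬ IsField R) (hm3 : maximalIdeal R ^ 3 = ⊥) {p n : ℕ}
    (N : Submodule R (Fin p → R)) (hN : ∀ x ∈ N, ∀ i, x i ∈ maximalIdeal R)
    (π : (Fin n → R) →ₗ[R] N) (hπ : Function.Surjective π)
    (hK : ∀ x, π x = 0 → ∀ i, x i ∈ maximalIdeal R)
    (h₁ : Function.Injective (N.subtype.lTensor N))
    (h₂ : Function.Injective ((LinearMap.ker π).subtype.rTensor N)) : n = 0 := by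
  have hex : Function.Exact (LinearMap.ker π).subtype π := LinearMap.exact_subtype_ker_map π
  have hK2 : ∀ x : Fin n → R, (∀ i, x i ∈ maximalIdeal R ^ 2) → x ∈ LinearMap.ker π := by
    intro x hx
    rw [LinearMap.mem_ker, eq_sum_single x, map_sum]
    refine Finset.sum_eq_zero fun i _ ↦ ?_
    rw [map_smul]
    ext j
    have : x i * (π (Pi.single i 1)).1 j ∈ maximalIdeal R ^ 3 := by
      rw [pow_succ]
      exact Ideal.mul_mem_mul (hx i) (hN _ (π _).2 j)
    rw [hm3] at this
    simpa using this
  -- `m` annihilates `N ⊗ N`, because `m ^ 2` annihilates `N`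
  have hann : ∀ a ∈ maximalIdeal R, ∀ x y : N, a • (x ⊗ₜ[R] y) = 0 := by
    intro a ha x y
    apply h₁
    rw [map_zero, map_smul, LinearMap.lTensor_tmul, Submodule.subtype_apply, eq_sum_single y.1,
      tmul_sum, Finset.smul_sum]
    refine Finset.sum_eq_zero fun i _ ↦ ?_
    rw [tmul_smul, smul_tmul', smul_tmul', smul_smul]
    suffices h : (a * y.1 i) • x = 0 by rw [h, zero_tmul]
    ext j
    have : a * y.1 i * x.1 j ∈ maximalIdeal R ^ 3 := by
      rw [pow_succ, pow_two]
      exact Ideal.mul_mem_mul (Ideal.mul_mem_mul ha (hN _ y.2 i)) (hN _ x.2 j)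
    rw [hm3] at this
    simpa using this
  refine eq_zero_of_decomposition hfield ⟨3, hm3⟩ (LinearMap.ker π) hK2 ?_ ?_ hK
  · intro f hf
    let t : (Fin n → R) ⊗[R] (Fin n → R) :=
      ∑ i, ∑ j, f i j • (Pi.single i 1 ⊗ₜ[R] Pi.single j 1)
    have ht : coordMatrix R n t = f := by
      ext i j
      simp [t, map_sum, Finset.sum_apply, Pi.single_apply]
    have htker : t ∈ LinearMap.ker (TensorProduct.map π π) := by
      simp only [LinearMap.mem_ker, t, map_sum, map_smul, map_tmul]
      exact Finset.sum_eq_zero fun i _ ↦ Finset.sum_eq_zero fun j _ ↦ hann _ (hf i j) _ _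
    rw [TensorProduct.map_ker hex hπ hex hπ, Submodule.mem_sup] at htker
    obtain ⟨_, ⟨a, rfl⟩, _, ⟨b, rfl⟩, hab⟩ := htker
    refine ⟨_, _, by rw [← ht, ← hab, add_comm, map_add], ?_, ?_⟩
    · exact coordMatrix_col_mem _ b
    · exact coordMatrix_row_mem _ a
  · intro f hcol hrow
    let t : LinearMap.ker π ⊗[R] (Fin n → R) :=
      ∑ j, (⟨fun i ↦ f i j, hcol j⟩ : LinearMap.ker π) ⊗ₜ[R] Pi.single j 1
    have ht : coordMatrix R n ((LinearMap.ker π).subtype.rTensor _ t) = f := by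
      ext i j
      simp [t, map_sum, Finset.sum_apply, Pi.single_apply]
    have htker : π.lTensor (LinearMap.ker π) t = 0 := by
      apply h₂
      rw [map_zero]
      simp only [t, map_sum, LinearMap.lTensor_tmul, LinearMap.rTensor_tmul,
        Submodule.subtype_apply]
      have : ∀ j, (fun i ↦ f i j) ⊗ₜ[R] π (Pi.single j 1) =
          ∑ i, (Pi.single i 1 : Fin n → R) ⊗ₜ[R] (f i j • π (Pi.single j 1)) := by
        intro j
        conv_lhs => rw [eq_sum_single (fun i ↦ f i j), sum_tmul]
        simp [smul_tmul]
      simp_rw [this]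
      rw [Finset.sum_comm]
      refine Finset.sum_eq_zero fun i _ ↦ ?_
      simp_rw [← tmul_sum, ← map_smul, ← map_sum]
      rw [← eq_sum_single, LinearMap.mem_ker.mp (hrow i), tmul_zero]
    obtain ⟨s, hs⟩ := (lTensor_exact (LinearMap.ker π) hex hπ t).mp htker
    rw [← ht, ← hs]
    intro i j
    clear hs
    induction s with
    | zero => simp
    | tmul x y =>
      simp only [LinearMap.lTensor_tmul, LinearMap.rTensor_tmul, Submodule.subtype_apply,
        coordMatrix_tmul, pow_two]
      exact Ideal.mul_mem_mul (hK _ x.2 i) (hK _ y.2 j)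
    | add x y hx hy =>
      simp only [map_add]
      exact add_mem hx hy

/-! ### Free resolutions and `Tor` -/

/-- The chain complex of finite free modules `R ^ r k` with differentials `d k`. -/
noncomputable def freeComplex (r : ℕ → ℕ)
    (d : ∀ k, (Fin (r (k + 1)) → R) →ₗ[R] (Fin (r k) → R))
    (hd : ∀ k, Function.Exact (d (k + 1)) (d k)) : ChainComplex (ModuleCat.{u} R) ℕ :=
  ChainComplex.of (fun k ↦ ModuleCat.of R (Fin (r k) → R))
    (fun k ↦ ModuleCat.ofHom (d k))
    (fun k ↦ by rw [← ModuleCat.ofHom_comp, (hd k).linearMap_comp_eq_zero]; rfl)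

theorem freeComplex_d (r : ℕ → ℕ)
    (d : ∀ k, (Fin (r (k + 1)) → R) →ₗ[R] (Fin (r k) → R))
    (hd : ∀ k, Function.Exact (d (k + 1)) (d k)) (k : ℕ) :
    (freeComplex r d hd).d (k + 1) k = ModuleCat.ofHom (d k) :=
  ChainComplex.of_d (fun k ↦ ModuleCat.of R (Fin (r k) → R)) (fun k ↦ ModuleCat.ofHom (d k)) k

/-- The projective resolution of `M` given by an exact sequence of finite free modules `R ^ r k`
with augmentation `ε`. -/
noncomputable def freeResolution (M : Type u) [AddCommGroup M] [Module R M] (r : ℕ → ℕ)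
    (d : ∀ k, (Fin (r (k + 1)) → R) →ₗ[R] (Fin (r k) → R))
    (hd : ∀ k, Function.Exact (d (k + 1)) (d k))
    (ε : (Fin (r 0) → R) →ₗ[R] M) (hε : Function.Surjective ε) (hdε : Function.Exact (d 0) ε) :
    ProjectiveResolution (ModuleCat.of R M) where
  complex := freeComplex r d hd
  projective k := by
    change Projective (ModuleCat.of R (Fin (r k) → R))
    infer_instance
  π := (ChainComplex.toSingle₀Equiv _ _).symm ⟨ModuleCat.ofHom ε, by
    rw [freeComplex_d]
    exact ModuleCat.hom_ext hdε.linearMap_comp_eq_zero⟩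
  quasiIso := ⟨fun n => by
    obtain _ | n := n
    · rw [ChainComplex.quasiIsoAt₀_iff, ShortComplex.quasiIso_iff_of_zeros']
      · refine (ShortComplex.exact_and_epi_g_iff_of_iso
          (S₂ := ShortComplex.mk (ModuleCat.ofHom (d 0)) (ModuleCat.ofHom ε)
            (by rw [← ModuleCat.ofHom_comp, hdε.linearMap_comp_eq_zero]; rfl)) ?_).2
          ⟨(ShortComplex.ShortExact.moduleCat_exact_iff_function_exact _).mpr hdε,
            (ModuleCat.epi_iff_surjective _).mpr hε⟩
        exact ShortComplex.isoMk (Iso.refl _) (Iso.refl _) (Iso.refl _)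
          ((Category.id_comp _).trans
            ((freeComplex_d r d hd 0).symm.trans (Category.comp_id _).symm))
          ((Category.id_comp _).trans
            ((ChainComplex.toSingle₀Equiv_symm_apply_f_zero (C := freeComplex r d hd) _ _).symm.trans
              (Category.comp_id _).symm))
      all_goals rfl
    · rw [quasiIsoAt_iff_exactAt']
      · rw [HomologicalComplex.exactAt_iff' _ (n + 1 + 1) (n + 1) n (by simp) (by simp)]
        rw [ShortComplex.ShortExact.moduleCat_exact_iff_function_exact]
        simp only [HomologicalComplex.sc', HomologicalComplex.shortComplexFunctor',
          freeComplex_d]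
        exact hd _
      · apply ChainComplex.exactAt_succ_single_obj⟩

/-- A resolution by finite free modules computes `Tor`: if `Tor_{k+1}(M, M) = 0`, then tensoring
the resolution with `M` keeps it exact at spot `k + 1`. -/
theorem exact_lTensor_of_isZero_tor (M : Type u) [AddCommGroup M] [Module R M] (r : ℕ → ℕ)
    (d : ∀ k, (Fin (r (k + 1)) → R) →ₗ[R] (Fin (r k) → R))
    (hd : ∀ k, Function.Exact (d (k + 1)) (d k))
    (ε : (Fin (r 0) → R) →ₗ[R] M) (hε : Function.Surjective ε) (hdε : Function.Exact (d 0) ε)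
    (k : ℕ)
    (h : IsZero (((Tor (ModuleCat.{u} R) (k + 1)).obj
      (ModuleCat.of R M)).obj (ModuleCat.of R M))) :
    Function.Exact ((d (k + 1)).lTensor M) ((d k).lTensor M) := by
  let P := freeResolution M r d hd ε hε hdε
  have h' := h.of_iso (P.isoLeftDerivedObj
    ((MonoidalCategory.tensoringLeft (ModuleCat.{u} R)).obj (ModuleCat.of R M)) (k + 1)).symm
  have h'' := (HomologicalComplex.exactAt_iff_isZero_homology _ _).mpr h'
  rw [HomologicalComplex.exactAt_iff' _ (k + 1 + 1) (k + 1) k (by simp) (by simp),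
    ShortComplex.ShortExact.moduleCat_exact_iff_function_exact] at h''
  have e1 : P.complex.d (k+1+1) (k+1) = ModuleCat.ofHom (d (k+1)) := freeComplex_d r d hd _
  have e0 : P.complex.d (k+1) k = ModuleCat.ofHom (d k) := freeComplex_d r d hd _
  simp only [HomologicalComplex.sc', HomologicalComplex.shortComplexFunctor',
    Functor.mapHomologicalComplex_obj_d, e1, e0] at h''
  exact h''

/-! ### Minimal syzygies -/

/-- Exactness of `M ⊗ F₂ → M ⊗ F₁ → M ⊗ F₀` says that the inclusion in `F₀` of the image `N` of
`F₁` stays injective after tensoring with `M`. -/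
theorem lTensor_subtype_injective_of_exact {M F₀ F₁ F₂ : Type*} [AddCommGroup M] [Module R M]
    [AddCommGroup F₀] [Module R F₀] [AddCommGroup F₁] [Module R F₁] [AddCommGroup F₂] [Module R F₂]
    (N : Submodule R F₀) (π : F₁ →ₗ[R] N) (hπ : Function.Surjective π) (d : F₂ →ₗ[R] F₁)
    (hd : π ∘ₗ d = 0)
    (h : Function.Exact (d.lTensor M) ((N.subtype ∘ₗ π).lTensor M)) :
    Function.Injective (N.subtype.lTensor M) := by
  rw [injective_iff_map_eq_zero]
  intro x hx
  obtain ⟨y, rfl⟩ := π.lTensor_surjective M hπ x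
  rw [← LinearMap.comp_apply, ← LinearMap.lTensor_comp] at hx
  obtain ⟨z, rfl⟩ := (h y).mp hx
  rw [← LinearMap.comp_apply, ← LinearMap.lTensor_comp, hd, LinearMap.lTensor_zero,
    LinearMap.zero_apply]

section Syzygy

variable [IsNoetherianRing R] [IsLocalRing R]

variable (R) in
/-- A submodule of some finite free module `Rⁿ`, together with `n`. -/
abbrev FreeSub := Σ n : ℕ, Submodule R (Fin n → R)

/-- The rank of a chosen minimal free cover of a submodule of `Rⁿ`. -/
noncomputable def coverRank (S : FreeSub R) : ℕ :=
  (exists_minimal_cover (R := R) S.2).choose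

/-- A chosen minimal free cover of a submodule of `Rⁿ`. -/
noncomputable def coverMap (S : FreeSub R) : (Fin (coverRank S) → R) →ₗ[R] S.2 :=
  (exists_minimal_cover (R := R) S.2).choose_spec.choose

theorem coverMap_surjective (S : FreeSub R) : Function.Surjective (coverMap S) :=
  (exists_minimal_cover (R := R) S.2).choose_spec.choose_spec.1

theorem coverMap_minimal (S : FreeSub R) :
    ∀ x, coverMap S x = 0 → ∀ i, x i ∈ maximalIdeal R :=
  (exists_minimal_cover (R := R) S.2).choose_spec.choose_spec.2

/-- The iterated syzygies of a submodule `S` of a finite free module, formed with minimal covers;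
`syz S 0` is `S` itself. -/
noncomputable def syz (S : FreeSub R) : ℕ → FreeSub R
  | 0 => S
  | k + 1 => ⟨coverRank (syz S k), LinearMap.ker (coverMap (syz S k))⟩

/-- A minimal free resolution of `M`, split into the minimal covers `π k : R ^ r (k + 1) → N k` of
its syzygies `N k ⊆ R ^ r k`. -/
theorem exists_minimal_syzygies (M : Type u) [AddCommGroup M] [Module R M] [Module.Finite R M] :
    ∃ (r : ℕ → ℕ) (N : ∀ k, Submodule R (Fin (r k) → R))
      (π : ∀ k, (Fin (r (k + 1)) → R) →ₗ[R] N k) (ε : (Fin (r 0) → R) →ₗ[R] M),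
      Function.Surjective ε ∧ LinearMap.ker ε = N 0 ∧ (∀ k, Function.Surjective (π k)) ∧
      (∀ k, LinearMap.ker (π k) = N (k + 1)) ∧
      ∀ k, ∀ x ∈ N k, ∀ i, x i ∈ maximalIdeal R := by
  obtain ⟨p, ε, hε, hmin⟩ := exists_minimal_cover (R := R) M
  let S : FreeSub R := ⟨p, LinearMap.ker ε⟩
  refine ⟨fun k ↦ (syz S k).1, fun k ↦ (syz S k).2, fun k ↦ coverMap (syz S k), ε, hε, rfl,
    fun k ↦ coverMap_surjective _, fun k ↦ rfl, fun k ↦ ?_⟩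
  cases k with
  | zero => exact hmin
  | succ k => exact coverMap_minimal (syz S k)

/-- The vanishing of `Tor₂(M, M)` and `Tor₃(M, M)` already makes `M` free. -/
theorem free_of_isZero_tor (hm3 : maximalIdeal R ^ 3 = ⊥)
    (M : Type u) [AddCommGroup M] [Module R M] [Module.Finite R M]
    (htor₂ : IsZero (((Tor (ModuleCat.{u} R) 2).obj (ModuleCat.of R M)).obj (ModuleCat.of R M)))
    (htor₃ : IsZero (((Tor (ModuleCat.{u} R) 3).obj (ModuleCat.of R M)).obj (ModuleCat.of R M))) :
    Module.Free R M := by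
  obtain ⟨r, N, π, ε, hε, hkε, hπ, hkπ, hN⟩ := exists_minimal_syzygies (R := R) M
  suffices hker : N 0 = ⊥ from
    Module.Free.of_equiv (LinearEquiv.ofBijective ε ⟨LinearMap.ker_eq_bot.mp (hkε.trans hker), hε⟩)
  by_cases hfield : IsField R
  · rw [isField_iff_maximalIdeal_eq] at hfield
    rw [Submodule.eq_bot_iff]
    intro x hx
    ext i
    simpa [hfield] using hN 0 x hx i
  let d (k : ℕ) : (Fin (r (k + 1)) → R) →ₗ[R] (Fin (r k) → R) := (N k).subtype ∘ₗ π k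
  have hrange (k : ℕ) : LinearMap.range (d k) = N k := by
    rw [LinearMap.range_comp_of_range_eq_top _ (LinearMap.range_eq_top.mpr (hπ k)),
      Submodule.range_subtype]
  have hexact (k : ℕ) : Function.Exact (d (k + 1)) (d k) := by
    rw [LinearMap.exact_iff, hrange, LinearMap.ker_comp_of_ker_eq_bot _ (Submodule.ker_subtype _),
      hkπ]
  have hdε : Function.Exact (d 0) ε := by rw [LinearMap.exact_iff, hrange, hkε]
  have hNε : Function.Exact (N 0).subtype ε := by
    rw [LinearMap.exact_iff, Submodule.range_subtype, hkε]
  have hNπ (k : ℕ) : Function.Exact (N (k + 1)).subtype (π k) := by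
    rw [LinearMap.exact_iff, Submodule.range_subtype, hkπ]
  have inj (k : ℕ) (h : IsZero (((Tor (ModuleCat.{u} R) (k + 1)).obj
      (ModuleCat.of R M)).obj (ModuleCat.of R M))) :
      Function.Injective ((N k).subtype.rTensor M) := by
    refine (LinearMap.lTensor_inj_iff_rTensor_inj _ _).mp ?_
    refine lTensor_subtype_injective_of_exact (N k) (π k) (hπ k) (d (k + 1)) ?_
      (exact_lTensor_of_isZero_tor M r d hexact ε hε hdε k h)
    refine LinearMap.ext fun c ↦ (hNπ k _).mpr ⟨π (k + 1) c, rfl⟩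
  -- dimension shifting in the other variable, as in the proof that `Tor` is balanced
  have balance (k : ℕ) (h : Function.Injective ((N (k + 1)).subtype.rTensor M)) :
      Function.Injective ((N 0).subtype.lTensor (N k)) :=
    lTensor_injective_of_exact_of_exact_of_rTensor_injective (hNπ k) (hπ k) hNε hε h
      (Module.Flat.lTensor_preserves_injective_linearMap _ (N 0).subtype_injective)
  have h₁ : Function.Injective ((N 0).subtype.lTensor (N 0)) := balance 0 (inj 1 htor₂)
  have h₂ : Function.Injective ((N 1).subtype.rTensor (N 0)) := by
    have hflat : Function.Injective ((N 1).subtype.rTensor (Fin (r 0) → R)) :=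
      Module.Flat.rTensor_preserves_injective_linearMap _ (Submodule.subtype_injective _)
    refine Function.Injective.of_comp (f := (N 0).subtype.lTensor (Fin (r 1) → R)) ?_
    convert hflat.comp (balance 1 (inj 2 htor₃)) using 1
    funext t
    exact LinearMap.congr_fun ((LinearMap.lTensor_comp_rTensor ..).trans
      (LinearMap.rTensor_comp_lTensor ..).symm) t
  rw [← hkπ 0] at h₂
  have hn : r 1 = 0 := eq_zero_of_injective hfield hm3 (N 0) (hN 0) (π 0) (hπ 0)
    (fun x hx ↦ hN 1 x (by rw [← hkπ 0]; exact hx)) h₁ h₂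
  have : IsEmpty (Fin (r (0 + 1))) := by rw [zero_add, hn]; infer_instance
  have : Subsingleton (N 0) := (hπ 0).subsingleton
  exact Submodule.subsingleton_iff_eq_bot.mp this

end Syzygy

end

theorem stmt_1 (R : Type u) [CommRing R] [IsNoetherianRing R] [IsLocalRing R]
    (hm3 : (IsLocalRing.maximalIdeal R) ^ 3 = ⊥)
    (M : Type u) [AddCommGroup M] [Module R M] [Module.Finite R M]
    (htor : ∀ i : ℕ, 2 ≤ i → i ≤ 5 →
      IsZero (((Tor (ModuleCat.{u} R) i).obj (ModuleCat.of R M)).obj (ModuleCat.of R M))) :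
    Module.Free R M :=
  free_of_isZero_tor hm3 M (htor 2 (by simp) (by simp)) (htor 3 (by simp) (by simp))
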